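/- Let δ ∈ (0,1), let K ≥ 1 be a natural number, and define the grid points α_k = δ + (1−δ)·k/K for k = 0,1,…,K. Suppose C ≥ 0 satisfies |Γ'(γ)/Γ(γ)| ≤ C for every γ ∈ [δ,1]. Then for every α ∈ [δ,1] and every real t ≥ 1 there exists k ∈ {0,…,K} such that |k_α(t) − k_{α_k}(t)| ≤ ((1−δ)/(2K)) · (log t + C). -/

import Mathlib

/-!
On `(0, 1]` one has `Γ ≥ 1`, by convexity of `Γ` and `Γ(1) = Γ(2) = 1`; hence
`0 < k_γ(t) ≤ 1` for `γ ∈ (0, 1]` and `t ≥ 1`. Since `∂_γ k_γ(t) = k_γ(t) (log t - ψ(γ))`,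
the map `γ ↦ k_γ(t)` is Lipschitz on `[δ, 1]` with constant `log t + C` by the mean value
inequality. The grid has mesh `(1 - δ) / K`, so some grid point lies within half a mesh of `α`.
-/

open Real

/-- The continuous power-law kernel `k_γ(t) = t^(γ-1) / Γ(γ)`. -/
noncomputable def powerKernel (γ t : ℝ) : ℝ := t ^ (γ - 1) / Real.Gamma γ

/-- Convexity of `Γ` with `Γ(1) = Γ(2) = 1` forces `Γ ≥ 1` to the left of `1`. -/
lemma one_le_Gamma_of_le_one {s : ℝ} (h0 : 0 < s) (h1 : s ≤ 1) : 1 ≤ Real.Gamma s := by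
  have hs : 0 < 2 - s := by linarith
  -- `1 = s / (2 - s) + 2 (1 - s) / (2 - s)` is a convex combination of `s` and `2`
  have h := And.right Real.convexOn_Gamma (Set.mem_Ioi.2 h0) (Set.mem_Ioi.2 (zero_lt_two' ℝ))
    (show 0 ≤ 1 / (2 - s) by positivity)
    (show 0 ≤ (1 - s) / (2 - s) from div_nonneg (by linarith) hs.le) (by field_simp; ring)
  have e : (1 / (2 - s)) • s + ((1 - s) / (2 - s)) • (2 : ℝ) = 1 := by
    simp only [smul_eq_mul]; field_simp; ring
  rw [e, Real.Gamma_one, Real.Gamma_two] at h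
  have e2 : (1 / (2 - s)) • Real.Gamma s + ((1 - s) / (2 - s)) • (1 : ℝ)
      = (Real.Gamma s + (1 - s)) / (2 - s) := by
    simp only [smul_eq_mul]; field_simp
  rw [e2, le_div_iff₀ hs] at h
  linarith

lemma hasDerivAt_powerKernel {γ t : ℝ} (hγ : 0 < γ) (ht : 0 < t) :
    HasDerivAt (fun x => powerKernel x t)
      (powerKernel γ t * (Real.log t - deriv Real.Gamma γ / Real.Gamma γ)) γ := by
  have hG : HasDerivAt Real.Gamma (deriv Real.Gamma γ) γ :=
    (Real.differentiableAt_Gamma fun m => by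
      have : (0 : ℝ) ≤ m := m.cast_nonneg
      linarith).hasDerivAt
  have hΓ : Real.Gamma γ ≠ 0 := (Real.Gamma_pos_of_pos hγ).ne'
  have h := (((hasDerivAt_id γ).sub_const 1).const_rpow ht).div hG hΓ
  unfold powerKernel
  refine h.congr_deriv ?_
  simp only [id]
  field_simp

lemma powerKernel_lipschitz {δ C t : ℝ} (hδ0 : 0 < δ)
    (hψ : ∀ γ ∈ Set.Icc δ 1, |deriv Real.Gamma γ / Real.Gamma γ| ≤ C) (ht : 1 ≤ t)
    {a b : ℝ} (ha : a ∈ Set.Icc δ 1) (hb : b ∈ Set.Icc δ 1) :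
    |powerKernel a t - powerKernel b t| ≤ (Real.log t + C) * |a - b| := by
  refine (convex_Icc δ 1).norm_image_sub_le_of_norm_hasDerivWithin_le
    (f := fun x => powerKernel x t)
    (f' := fun γ => powerKernel γ t * (Real.log t - deriv Real.Gamma γ / Real.Gamma γ))
    (fun γ hγ => (hasDerivAt_powerKernel (hδ0.trans_le hγ.1) (by linarith)).hasDerivWithinAt)
    (fun γ hγ => ?_) hb ha
  have hγ0 := hδ0.trans_le hγ.1
  have hlog : 0 ≤ Real.log t := Real.log_nonneg ht
  have hk : |powerKernel γ t| ≤ 1 := by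
    have hΓ := one_le_Gamma_of_le_one hγ0 hγ.2
    have hp : t ^ (γ - 1) ≤ 1 := Real.rpow_le_one_of_one_le_of_nonpos ht (by linarith [hγ.2])
    have hp0 : 0 ≤ t ^ (γ - 1) := Real.rpow_nonneg (by linarith) _
    unfold powerKernel
    rw [abs_of_nonneg (div_nonneg hp0 (by linarith)), div_le_one (by linarith)]
    linarith
  have hd : |Real.log t - deriv Real.Gamma γ / Real.Gamma γ| ≤ Real.log t + C := by
    have := abs_le.1 (hψ γ hγ)
    exact abs_le.2 ⟨by linarith, by linarith⟩
  rw [Real.norm_eq_abs, abs_mul]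
  exact (mul_le_of_le_one_left (abs_nonneg _) hk).trans hd


/-- Uniform-grid quantisation: with grid points `α_k = δ + (1−δ)·k/K` for `k = 0,…,K`
and a uniform bound `C` on the digamma function on `[δ,1]`, every `α ∈ [δ,1]` and
`t ≥ 1` admit a grid point within kernel distance `((1−δ)/(2K)) · (log t + C)`. -/
theorem powerKernel_grid_quantisation
    (δ : ℝ) (hδ0 : 0 < δ) (hδ1 : δ < 1) (K : ℕ) (hK : 1 ≤ K) (C : ℝ) (hC : 0 ≤ C)
    (hψ : ∀ γ ∈ Set.Icc δ 1, |deriv Real.Gamma γ / Real.Gamma γ| ≤ C)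
    (α : ℝ) (hα : α ∈ Set.Icc δ 1) (t : ℝ) (ht : 1 ≤ t) :
    ∃ k ≤ K, |powerKernel α t - powerKernel (δ + (1 - δ) * k / K) t| ≤
      ((1 - δ) / (2 * K)) * (Real.log t + C) := by
  have hK0 : (0 : ℝ) < K := by exact_mod_cast hK
  have hd : 0 < 1 - δ := by linarith
  -- `x` is the position of `α` in grid units; the witness `k` is `x` rounded to the nearest integer
  obtain ⟨x, hx⟩ : ∃ x, x = (α - δ) * K / (1 - δ) := ⟨_, rfl⟩
  have hα' : α = δ + (1 - δ) * x / K := by rw [hx]; field_simp; ring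
  have hx0 : 0 ≤ x := by
    rw [hx]; exact div_nonneg (mul_nonneg (by linarith [hα.1]) hK0.le) hd.le
  have hxK : x ≤ K := by
    rw [hx, div_le_iff₀ hd]; nlinarith [hα.2]
  have hk1 : (⌊x + 1 / 2⌋₊ : ℝ) ≤ x + 1 / 2 := Nat.floor_le (by linarith)
  have hk2 : x + 1 / 2 < ⌊x + 1 / 2⌋₊ + 1 := Nat.lt_floor_add_one _
  generalize ⌊x + 1 / 2⌋₊ = k at hk1 hk2
  have hkK : k ≤ K := by
    have : (k : ℝ) < K + 1 := by linarith
    exact Nat.lt_succ_iff.1 (by exact_mod_cast this)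
  have hkK' : (k : ℝ) ≤ K := by exact_mod_cast hkK
  refine ⟨k, hkK, ?_⟩
  have hmem : δ + (1 - δ) * k / K ∈ Set.Icc δ 1 := by
    constructor
    · have : 0 ≤ (1 - δ) * k / K := by positivity
      linarith
    · have : (1 - δ) * k / K ≤ 1 - δ := by
        rw [div_le_iff₀ hK0]; exact mul_le_mul_of_nonneg_left hkK' hd.le
      linarith
  have hdist : |α - (δ + (1 - δ) * k / K)| ≤ (1 - δ) / (2 * K) := by
    have e : α - (δ + (1 - δ) * k / K) = (1 - δ) / K * (x - k) := by rw [hα']; ring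
    have hxk : |x - k| ≤ 1 / 2 := abs_le.2 ⟨by linarith, by linarith⟩
    rw [e, abs_mul, abs_of_pos (div_pos hd hK0)]
    calc (1 - δ) / K * |x - k| ≤ (1 - δ) / K * (1 / 2) :=
          mul_le_mul_of_nonneg_left hxk (div_pos hd hK0).le
      _ = (1 - δ) / (2 * K) := by field_simp
  have hlog : 0 ≤ Real.log t := Real.log_nonneg ht
  calc _ ≤ (Real.log t + C) * |α - (δ + (1 - δ) * k / K)| :=
        powerKernel_lipschitz hδ0 hψ ht hα hmem
    _ ≤ (Real.log t + C) * ((1 - δ) / (2 * K)) :=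
        mul_le_mul_of_nonneg_left hdist (by linarith)
    _ = _ := mul_comm _ _
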